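/- arXiv:1308.3316 — 2 statements merged into one kernel-verified Lean document; each statement's English description precedes it below -/
import Mathlib

section
/- Let m_1, m_2 be integers with m_1 ≥ 4 and m_2 ≥ 3. Then D_±(C_{m_1} ⊕ C_{m_2}) ≥ ⌊log₂(m_1/3)⌋ + ⌊log₂(m_2/3)⌋ + 4. -/
open Finset

/-- A sequence `g` over `G` has an `A`-weighted zero-subsum: there is a nonempty
index set `I` and weights `a i ∈ A` for `i ∈ I` with `∑ i ∈ I, a i • g i = 0`. -/
def HasWZS (A : Set ℤ) {G : Type*} [AddCommGroup G] {ℓ : ℕ} (g : Fin ℓ → G) : Prop :=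
  ∃ (I : Finset (Fin ℓ)) (a : Fin ℓ → ℤ), I.Nonempty ∧ (∀ i ∈ I, a i ∈ A) ∧
    ∑ i ∈ I, a i • g i = 0

/-- The `A`-weighted Davenport constant of `G`: the smallest `ℓ` such that every
sequence of length `ℓ` over `G` has an `A`-weighted zero-subsum. -/
noncomputable def DavW (A : Set ℤ) (G : Type*) [AddCommGroup G] : ℕ :=
  sInf {ℓ : ℕ | ∀ g : Fin ℓ → G, HasWZS A g}

/-- The plus-minus weighted Davenport constant. -/
noncomputable def Davpm (G : Type*) [AddCommGroup G] : ℕ :=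
  DavW ({1, -1} : Set ℤ) G

/-
When a signed sum of integer vectors vanishes in `ZMod m₁ × ZMod m₂`, each of its two coordinates
is zero or has absolute value at least the modulus. It therefore suffices to find integer vectors
all of whose nontrivial signed sums avoid `zeroOrLarge m₁ ×ˢ zeroOrLarge m₂`.
Doubling one coordinate of such vectors and adjoining the corresponding unit vector doubles one of
the two bounds at the cost of one more vector, so everything is reduced to two small seeds: two
vectors for the bounds `(2, 3)` and four vectors for the bounds `(6, 3)`.
-/

section WeightedDavenport

variable {A : Set ℤ} {G : Type*} [AddCommGroup G]

lemma HasWZS.of_comp_embedding {k ℓ : ℕ} {g : Fin ℓ → G} (f : Fin k ↪ Fin ℓ)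
    (h : HasWZS A (g ∘ f)) : HasWZS A g := by
  obtain ⟨I, a, hI, ha, hsum⟩ := h
  refine ⟨I.map f, Function.extend f a 0, hI.map, ?_, ?_⟩
  · simpa only [Finset.forall_mem_map, f.injective.extend_apply] using ha
  · simpa only [Finset.sum_map, f.injective.extend_apply, Function.comp_apply] using hsum

lemma HasWZS.of_not_injective {a : ℤ} (ha : a ∈ A) (hna : -a ∈ A) {ℓ : ℕ} {g : Fin ℓ → G}
    (hg : ¬ Function.Injective g) : HasWZS A g := by
  obtain ⟨i, j, hgij, hij⟩ := Function.not_injective_iff.1 hg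
  refine ⟨{i, j}, fun k => if k = i then a else -a, insert_nonempty i {j}, fun k _ => ?_, ?_⟩
  · dsimp only
    split_ifs
    exacts [ha, hna]
  · simp [Finset.sum_pair hij, hij.symm, hgij]

lemma lt_davW {N n : ℕ} (hN : ∀ f : Fin N → G, HasWZS A f) {g : Fin n → G}
    (hg : ¬ HasWZS A g) : n < DavW A G := by
  by_contra! hle
  have hmin : ∀ f : Fin (DavW A G) → G, HasWZS A f :=
    Nat.sInf_mem (s := {ℓ | ∀ f : Fin ℓ → G, HasWZS A f}) ⟨N, hN⟩
  exact hg ((hmin _).of_comp_embedding (Fin.castLEEmb hle))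

lemma lt_davpm [Finite G] {n : ℕ} {g : Fin n → G} (hg : ¬ HasWZS ({1, -1} : Set ℤ) g) :
    n < Davpm G := by
  refine lt_davW (N := Nat.card G + 1) (fun f => ?_) hg
  refine HasWZS.of_not_injective (a := 1) (by simp) (by simp) fun hf => ?_
  simpa using Nat.card_le_card_of_injective f hf

end WeightedDavenport

section SignedSums

variable {G H : Type*} [AddCommGroup G] [AddCommGroup H]

/-- No nontrivial signed sum of the family `g` lies in `S`. A signed sum has coefficients in
`{0, 1, -1}`, encoded as `SignType`; it is nontrivial when some coefficient is nonzero. For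
`S = {0}` this says that `g` has no plus-minus weighted zero-subsum. -/
def SignedSumsAvoid {ι : Type*} [Fintype ι] (g : ι → G) (S : Set G) : Prop :=
  ∀ c : ι → SignType, c ≠ 0 → ∑ i, (c i : ℤ) • g i ∉ S

lemma SignedSumsAvoid.not_hasWZS {n : ℕ} {g : Fin n → G} (hg : SignedSumsAvoid g {0}) :
    ¬ HasWZS ({1, -1} : Set ℤ) g := by
  rintro ⟨I, a, ⟨j, hj⟩, ha, hsum⟩
  have coe_sign : ∀ i ∈ I, (SignType.sign (a i) : ℤ) = a i := by
    intro i hi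
    obtain h | h : a i = 1 ∨ a i = -1 := ha i hi <;> simp [h]
  refine hg (fun i => if i ∈ I then SignType.sign (a i) else 0) (fun hc => ?_) ?_
  · have haj : a j = 0 := by simpa [hj] using congrFun hc j
    simpa [haj] using ha j hj
  · rw [Set.mem_singleton_iff, ← hsum, ← Finset.sum_subset (Finset.subset_univ I)]
    · exact Finset.sum_congr rfl fun i hi => by rw [if_pos hi, coe_sign i hi]
    · intro i _ hi
      simp [hi]

lemma SignedSumsAvoid.map {ι : Type*} [Fintype ι] {g : ι → G} {S : Set G}
    (hg : SignedSumsAvoid g S) (f : G →+ H) {T : Set H} (hT : f ⁻¹' T ⊆ S) :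
    SignedSumsAvoid (f ∘ g) T := by
  intro c hc hmem
  refine hg c hc (hT ?_)
  simpa only [Set.mem_preimage, map_sum, map_zsmul, Function.comp_apply] using hmem

lemma SignedSumsAvoid.cons_map {n : ℕ} {g : Fin n → G} {S : Set G} (hg : SignedSumsAvoid g S)
    (f : G →+ H) {e : H} {T : Set H} (he : ∀ ε : SignType, ε ≠ 0 → (ε : ℤ) • e ∉ T)
    (hT : ∀ (ε : SignType) (v : G), (ε : ℤ) • e + f v ∈ T → v ∈ S) :
    SignedSumsAvoid (Fin.cons e (f ∘ g) : Fin (n + 1) → H) T := by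
  intro c hc hmem
  rw [Fin.sum_univ_succ] at hmem
  by_cases htail : Fin.tail c = 0
  · have hsucc : ∀ i : Fin n, c i.succ = 0 := congrFun htail
    have hhead : c 0 ≠ 0 := fun h0 => hc (funext (Fin.cases h0 hsucc))
    exact he (c 0) hhead (by simpa [hsucc] using hmem)
  · have hfg : SignedSumsAvoid (f ∘ g) {w | (c 0 : ℤ) • e + w ∈ T} := hg.map f (hT (c 0))
    exact hfg (Fin.tail c) htail hmem

end SignedSums

section Doubling

/-- The integers that are zero or of absolute value at least `P`. A nonzero integer outside this
set stays nonzero modulo every `m ≥ P`. -/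
def zeroOrLarge (P : ℤ) : Set ℤ := {x | x = 0 ∨ P ≤ |x|}

variable {P Q : ℤ}

lemma signType_notMem_zeroOrLarge (hP : 1 < P) {ε : SignType} (hε : ε ≠ 0) :
    (ε : ℤ) ∉ zeroOrLarge P := by
  cases ε <;> simp_all [zeroOrLarge]

lemma mem_zeroOrLarge_of_signType_add_two_mul {ε : SignType} {x : ℤ}
    (h : (ε : ℤ) + 2 * x ∈ zeroOrLarge (2 * P)) : x ∈ zeroOrLarge P := by
  simp only [zeroOrLarge, Set.mem_ofPred_eq, le_abs] at h ⊢
  have hε : (ε : ℤ) = 0 ∨ (ε : ℤ) = 1 ∨ (ε : ℤ) = -1 := by cases ε <;> simp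
  omega

lemma mem_zeroOrLarge_of_intCast_eq_zero {m : ℕ} (hm : P ≤ m) {x : ℤ} (hx : (x : ZMod m) = 0) :
    x ∈ zeroOrLarge P := by
  rw [ZMod.intCast_zmod_eq_zero_iff_dvd, ← dvd_abs] at hx
  rcases eq_or_ne x 0 with rfl | hx0
  · exact Or.inl rfl
  · exact Or.inr (hm.trans (Int.le_of_dvd (abs_pos.2 hx0) hx))

lemma SignedSumsAvoid.exists_double {G : Type*} [AddCommGroup G] {T : Set G} {n : ℕ}
    {g : Fin n → ℤ × G} (hP : 0 < P) (hg : SignedSumsAvoid g (zeroOrLarge P ×ˢ T)) :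
    ∃ g' : Fin (n + 1) → ℤ × G, SignedSumsAvoid g' (zeroOrLarge (2 * P) ×ˢ T) := by
  let dbl : ℤ × G →+ ℤ × G := (AddMonoidHom.mulLeft 2).prodMap (AddMonoidHom.id G)
  refine ⟨Fin.cons (1, 0) (dbl ∘ g), hg.cons_map dbl ?_ ?_⟩
  · rintro ε hε ⟨hmem, -⟩
    exact signType_notMem_zeroOrLarge (P := 2 * P) (by omega) hε (by simpa using hmem)
  · rintro ε v ⟨hmem₁, hmem₂⟩
    refine ⟨mem_zeroOrLarge_of_signType_add_two_mul (ε := ε) ?_, ?_⟩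
    · simpa [dbl] using hmem₁
    · simpa [dbl] using hmem₂

lemma SignedSumsAvoid.exists_double_iterate {G : Type*} [AddCommGroup G] {T : Set G} {n : ℕ}
    {g : Fin n → ℤ × G} (hP : 0 < P) (hg : SignedSumsAvoid g (zeroOrLarge P ×ˢ T)) (r : ℕ) :
    ∃ g' : Fin (n + r) → ℤ × G, SignedSumsAvoid g' (zeroOrLarge (2 ^ r * P) ×ˢ T) := by
  induction r with
  | zero => exact ⟨g, by simpa using hg⟩
  | succ r ih =>
    obtain ⟨g', hg'⟩ := ih
    rw [pow_succ', mul_assoc]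
    exact hg'.exists_double (by positivity)

lemma SignedSumsAvoid.swap {G H : Type*} [AddCommGroup G] [AddCommGroup H] {ι : Type*} [Fintype ι]
    {g : ι → G × H} {S : Set G} {T : Set H} (hg : SignedSumsAvoid g (S ×ˢ T)) :
    SignedSumsAvoid (Prod.swap ∘ g) (T ×ˢ S) :=
  hg.map (AddEquiv.prodComm : G × H ≃+ H × G).toAddMonoidHom fun _ h => h.symm

lemma SignedSumsAvoid.exists_not_hasWZS_zmod {n : ℕ} {g : Fin n → ℤ × ℤ}
    (hg : SignedSumsAvoid g (zeroOrLarge P ×ˢ zeroOrLarge Q)) {m₁ m₂ : ℕ} (hm₁ : P ≤ m₁)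
    (hm₂ : Q ≤ m₂) : ∃ g' : Fin n → ZMod m₁ × ZMod m₂, ¬ HasWZS ({1, -1} : Set ℤ) g' := by
  let red := (Int.castAddHom (ZMod m₁)).prodMap (Int.castAddHom (ZMod m₂))
  refine ⟨red ∘ g, (hg.map red fun v hv => ?_).not_hasWZS⟩
  obtain ⟨h₁, h₂⟩ := Prod.mk.inj hv
  exact ⟨mem_zeroOrLarge_of_intCast_eq_zero hm₁ h₁, mem_zeroOrLarge_of_intCast_eq_zero hm₂ h₂⟩

lemma SignedSumsAvoid.add_lt_davpm {n : ℕ} {g : Fin n → ℤ × ℤ} (hP : 0 < P) (hQ : 0 < Q)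
    (hg : SignedSumsAvoid g (zeroOrLarge P ×ˢ zeroOrLarge Q)) {m₁ m₂ r s : ℕ}
    (hm₁ : 2 ^ r * P ≤ m₁) (hm₂ : 2 ^ s * Q ≤ m₂) :
    n + r + s < Davpm (ZMod m₁ × ZMod m₂) := by
  have hm₁0 : (0 : ℤ) < m₁ := lt_of_lt_of_le (by positivity) hm₁
  have hm₂0 : (0 : ℤ) < m₂ := lt_of_lt_of_le (by positivity) hm₂
  have : NeZero m₁ := ⟨by omega⟩
  have : NeZero m₂ := ⟨by omega⟩
  obtain ⟨g₁, hg₁⟩ := hg.exists_double_iterate hP r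
  obtain ⟨g₂, hg₂⟩ := hg₁.swap.exists_double_iterate hQ s
  obtain ⟨f, hf⟩ := hg₂.swap.exists_not_hasWZS_zmod hm₁ hm₂
  exact lt_davpm hf

end Doubling

lemma signedSumsAvoid_two_three :
    SignedSumsAvoid ![((0 : ℤ), (1 : ℤ)), (1, 1)] (zeroOrLarge 2 ×ˢ zeroOrLarge 3) := by
  simp only [SignedSumsAvoid, zeroOrLarge, Set.mem_prod, Set.mem_ofPred_eq]
  decide

/- Let the coefficients be `p, q, r, t`. A first coordinate `±6` forces them all to be equal, and
the second coordinate is then `±1`. A first coordinate `0` forces either `p = q = r = -t ≠ 0`, with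
second coordinate `t = ±1`, or `t = 0` and `{p, q, r} = {0, 1, -1}`, with second coordinate
`r - p ∈ {±1, ±2}`. -/
lemma signedSumsAvoid_six_three :
    SignedSumsAvoid ![((1 : ℤ), (-1 : ℤ)), (1, 0), (1, 1), (3, 1)]
      (zeroOrLarge 6 ×ˢ zeroOrLarge 3) := by
  simp only [SignedSumsAvoid, zeroOrLarge, Set.mem_prod, Set.mem_ofPred_eq]
  decide

lemma floor_logb_natCast_div_natCast {b m d : ℕ} (hd : 0 < d) (hdm : d ≤ m) :
    ⌊Real.logb b ((m : ℝ) / d)⌋ = Nat.log b (m / d) := by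
  have one_le : (1 : ℝ) ≤ m / d := by
    rw [one_le_div (by exact_mod_cast hd)]
    exact_mod_cast hdm
  rw [Real.floor_logb_natCast (by positivity), Int.log_of_one_le_right b one_le,
    Nat.floor_div_eq_div]

theorem stmt8 (m1 m2 : ℕ) (hm1 : 4 ≤ m1) (hm2 : 3 ≤ m2) :
    ⌊Real.logb 2 ((m1 : ℝ) / 3)⌋ + ⌊Real.logb 2 ((m2 : ℝ) / 3)⌋ + 4
      ≤ (Davpm (ZMod m1 × ZMod m2) : ℤ) := by
  have floor_eq (m : ℕ) (hm : 3 ≤ m) : ⌊Real.logb 2 ((m : ℝ) / 3)⌋ = Nat.log 2 (m / 3) := by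
    exact_mod_cast floor_logb_natCast_div_natCast (b := 2) three_pos hm
  have two_pow_log_le (m : ℕ) (hm : 3 ≤ m) : 2 ^ Nat.log 2 (m / 3) * (3 : ℤ) ≤ m := by
    exact_mod_cast (Nat.le_div_iff_mul_le three_pos).1
      (Nat.pow_log_le_self 2 (Nat.div_pos hm three_pos).ne')
  rw [floor_eq m1 (by omega), floor_eq m2 hm2]
  have h1 := two_pow_log_le m1 (by omega)
  have h2 := two_pow_log_le m2 hm2
  rcases hlog : Nat.log 2 (m1 / 3) with _ | r
  · have := signedSumsAvoid_two_three.add_lt_davpm (m₁ := m1) (r := 1) two_pos three_pos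
      (by omega) h2
    omega
  · have := signedSumsAvoid_six_three.add_lt_davpm (m₁ := m1) (r := r) (by norm_num) three_pos
      (by rw [hlog, pow_succ] at h1; linarith) h2
    omega
end

section
/- Let m_1, …, m_r be positive integers such that at least ⌊r/2⌋ of them satisfy both {log₂ m_i} ≥ {log₂ 3} and m_i ≥ 4, and suppose every m_i satisfies {log₂ m_i} ≥ {log₂ 3}. If ∑_{i=1}^r {log₂ m_i} < ⌊r/2⌋ + 1, then D_±(C_{m_1} ⊕ ⋯ ⊕ C_{m_r}) = ⌊∑_{i=1}^r log₂ m_i⌋ + 1. -/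
open Finset

/-!
Sequences without plus-minus zero-subsum have distinct subset sums, which gives
`D_±(G) ≤ ⌊log₂ |G|⌋ + 1` for every finite `G`. Conversely, `x, 2x, 4x, …` produces
`⌊log₂ m⌋` such elements in a cyclic group of order `m`, and these add up over direct sums. Two
summands of orders `m ≥ 4` and `n` with `{log₂ m}, {log₂ n} ≥ {log₂ 3}` together yield one element
more than that: if `⌊log₂ m⌋ = p + 2` and `⌊log₂ n⌋ = q + 1`, then `m ≥ 6 · 2 ^ p` and
`n ≥ 3 · 2 ^ q`, and the powers of two below `2 ^ (p + 1)` and `2 ^ q` can be extended by the three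
elements `(-2 ^ p, 2 ^ q)`, `(2 ^ p, 2 ^ q)`, `(3 · 2 ^ p, 2 ^ q)`. With `k` disjoint such pairs the
lower bound is `∑ ⌊log₂ mᵢ⌋ + k + 1`, and it meets the upper bound once `∑ {log₂ mᵢ} < k + 1`.
-/

section Dissociated

variable {G : Type*} [AddCommGroup G] {κ ι : Type*} [Fintype κ] [Fintype ι]

/-- A family is dissociated if it has no nontrivial vanishing combination with coefficients in
`{-1, 0, 1}`, that is, no plus-minus weighted zero-subsum. Unlike in Mathlib's `AddDissociated`, the
elements are indexed, so that repetitions count. -/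
def Dissociated (g : κ → G) : Prop :=
  ∀ e : κ → ℤ, (∀ k, |e k| ≤ 1) → ∑ k, e k • g k = 0 → e = 0

lemma hasWZS_iff_not_dissociated {ℓ : ℕ} {g : Fin ℓ → G} :
    HasWZS ({1, -1} : Set ℤ) g ↔ ¬ Dissociated g := by
  constructor
  · rintro ⟨I, a, ⟨k, hk⟩, ha, hsum⟩ hg
    have he : (fun k ↦ if k ∈ I then a k else 0) = 0 := by
      refine hg _ (fun k ↦ ?_) ?_
      · split_ifs with hkI
        · obtain h | h : a k = 1 ∨ a k = -1 := ha k hkI <;> simp [h]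
        · simp
      · simpa [ite_smul] using hsum
    have hak : a k = 0 := by simpa [hk] using congrFun he k
    simpa [hak] using ha k hk
  · intro hg
    simp only [Dissociated, not_forall] at hg
    obtain ⟨e, he, hsum, hne⟩ := hg
    obtain ⟨k, hk⟩ := Function.ne_iff.1 hne
    refine ⟨univ.filter fun k ↦ e k ≠ 0, e, ⟨k, by simpa using hk⟩, fun k hk ↦ ?_, ?_⟩
    · have hk0 : e k ≠ 0 := by simpa using hk
      have := abs_le.1 (he k)
      simp only [Set.mem_insert_iff, Set.mem_singleton_iff]
      omega
    · rw [sum_filter_of_ne fun k _ hk ↦ left_ne_zero_of_smul hk, hsum]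

lemma Dissociated.comp_injective {g : κ → G} (hg : Dissociated g) {f : ι → κ}
    (hf : f.Injective) : Dissociated (g ∘ f) := by
  intro e he hsum
  have hext : Function.extend f e 0 = 0 := by
    refine hg _ (fun k ↦ ?_) ?_
    · by_cases hk : ∃ i, f i = k
      · obtain ⟨i, rfl⟩ := hk
        simpa only [hf.extend_apply] using he i
      · simp [Function.extend_apply' _ _ _ hk]
    · rw [← hsum, eq_comm]
      refine Fintype.sum_of_injective f hf _ _ (fun k hk ↦ ?_) fun i ↦ ?_
      · simp [Function.extend_apply' _ _ _ hk]
      · simp [hf.extend_apply]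
  rw [← Function.extend_comp hf e 0, hext, Pi.zero_comp]

lemma Dissociated.injective_sum {g : κ → G} (hg : Dissociated g) :
    Function.Injective fun s : Finset κ ↦ ∑ k ∈ s, g k := by
  classical
  intro s t hst
  let e : κ → ℤ := fun k ↦ (if k ∈ s then 1 else 0) - if k ∈ t then 1 else 0
  have he : e = 0 := by
    refine hg e (fun k ↦ ?_) ?_
    · by_cases hs : k ∈ s <;> by_cases ht : k ∈ t <;> simp [e, hs, ht]
    · simpa [e, sub_smul, ite_smul, sub_eq_zero] using hst
  ext k
  have hk : e k = 0 := congrFun he k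
  by_cases hs : k ∈ s <;> by_cases ht : k ∈ t <;> simp [e, hs, ht] at hk ⊢

lemma Dissociated.two_pow_card_le [Finite G] {g : κ → G} (hg : Dissociated g) :
    2 ^ Fintype.card κ ≤ Nat.card G := by
  simpa using Nat.card_le_card_of_injective _ hg.injective_sum

lemma hasWZS_of_card_lt [Finite G] {ℓ : ℕ} (h : Nat.card G < 2 ^ ℓ) (g : Fin ℓ → G) :
    HasWZS ({1, -1} : Set ℤ) g :=
  hasWZS_iff_not_dissociated.2 fun hg ↦
    h.not_ge (by simpa using hg.two_pow_card_le)

lemma davpm_le_log_card_add_one (G : Type*) [AddCommGroup G] [Finite G] :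
    Davpm G ≤ Nat.log 2 (Nat.card G) + 1 :=
  Nat.sInf_le (hasWZS_of_card_lt (Nat.lt_pow_succ_log_self one_lt_two _))

lemma Dissociated.card_lt_davpm [Finite G] {g : κ → G} (hg : Dissociated g) :
    Fintype.card κ < Davpm G := by
  by_contra! hle
  have hD : ∀ g : Fin (Davpm G) → G, HasWZS ({1, -1} : Set ℤ) g :=
    Nat.sInf_mem (s := {ℓ | ∀ g : Fin ℓ → G, HasWZS ({1, -1} : Set ℤ) g})
      ⟨_, hasWZS_of_card_lt (Nat.lt_pow_succ_log_self one_lt_two _)⟩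
  obtain ⟨f⟩ := Function.Embedding.nonempty_of_card_le (α := Fin (Davpm G)) (β := κ) (by simpa)
  exact hasWZS_iff_not_dissociated.1 (hD (g ∘ f)) (hg.comp_injective f.injective)

/-- The subgroup `H` contains a dissociated family of `n` elements. Stating this for subgroups of a
fixed group lets families from independent subgroups be concatenated. -/
def ContainsDissociated (H : AddSubgroup G) (n : ℕ) : Prop :=
  ∃ g : Fin n → G, (∀ k, g k ∈ H) ∧ Dissociated g

lemma Dissociated.containsDissociated {H : AddSubgroup G} {g : κ → G} (hg : Dissociated g)
    (hH : ∀ k, g k ∈ H) : ContainsDissociated H (Fintype.card κ) :=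
  ⟨g ∘ (Fintype.equivFin κ).symm, fun _ ↦ hH _, hg.comp_injective (Equiv.injective _)⟩

lemma ContainsDissociated.lt_davpm [Finite G] {H : AddSubgroup G} {n : ℕ}
    (h : ContainsDissociated H n) : n < Davpm G := by
  obtain ⟨g, -, hg⟩ := h
  simpa using hg.card_lt_davpm

lemma containsDissociated_zero (H : AddSubgroup G) : ContainsDissociated H 0 :=
  ⟨Fin.elim0, fun k ↦ k.elim0, fun _ _ _ ↦ Subsingleton.elim _ _⟩

lemma add_eq_zero_iff_of_disjoint {H K : AddSubgroup G} (hHK : Disjoint H K) {x y : G}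
    (hx : x ∈ H) (hy : y ∈ K) : x + y = 0 ↔ x = 0 ∧ y = 0 := by
  refine ⟨fun h ↦ ?_, fun ⟨hx0, hy0⟩ ↦ by rw [hx0, hy0, add_zero]⟩
  have hxK : x ∈ K := eq_neg_of_add_eq_zero_left h ▸ K.neg_mem hy
  have hx0 : x = 0 := AddSubgroup.disjoint_def.1 hHK hx hxK
  exact ⟨hx0, by simpa [hx0] using h⟩

lemma ContainsDissociated.sup {H K : AddSubgroup G} (hHK : Disjoint H K) {a b : ℕ}
    (hH : ContainsDissociated H a) (hK : ContainsDissociated K b) :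
    ContainsDissociated (H ⊔ K) (a + b) := by
  obtain ⟨g, hgH, hg⟩ := hH
  obtain ⟨g', hgK, hg'⟩ := hK
  have hdiss : Dissociated (Sum.elim g g') := by
    intro e he hsum
    rw [Fintype.sum_sum_type] at hsum
    obtain ⟨h, h'⟩ := (add_eq_zero_iff_of_disjoint hHK
      (sum_mem fun k _ ↦ H.zsmul_mem (hgH k) _) (sum_mem fun k _ ↦ K.zsmul_mem (hgK k) _)).1 hsum
    funext k
    rcases k with k | k
    · exact congrFun (hg (fun k ↦ e (.inl k)) (fun k ↦ he _) h) k
    · exact congrFun (hg' (fun k ↦ e (.inr k)) (fun k ↦ he _) h') k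
  have hmem : ∀ k, Sum.elim g g' k ∈ H ⊔ K := by
    rintro (k | k)
    · exact AddSubgroup.mem_sup_left (hgH k)
    · exact AddSubgroup.mem_sup_right (hgK k)
  simpa using hdiss.containsDissociated hmem

end Dissociated

section SignedBinary

variable {n : ℕ} {e : Fin n → ℤ}

lemma abs_sum_mul_two_pow_lt (he : ∀ k, |e k| ≤ 1) : |∑ k, e k * 2 ^ (k : ℕ)| < 2 ^ n := by
  induction n with
  | zero => simp
  | succ n ih =>
    rw [Fin.sum_univ_castSucc]
    have hinit : |∑ k : Fin n, e k.castSucc * 2 ^ (k : ℕ)| < 2 ^ n := ih fun k ↦ he _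
    have hlast : |e (Fin.last n) * 2 ^ n| ≤ 2 ^ n := by
      rw [abs_mul, abs_of_pos (by positivity : (0 : ℤ) < 2 ^ n)]
      exact mul_le_of_le_one_left (by positivity) (he _)
    calc |∑ k : Fin n, e k.castSucc * 2 ^ (k : ℕ) + e (Fin.last n) * 2 ^ n|
        ≤ |∑ k : Fin n, e k.castSucc * 2 ^ (k : ℕ)| + |e (Fin.last n) * 2 ^ n| := abs_add_le _ _
      _ < 2 ^ n + 2 ^ n := add_lt_add_of_lt_of_le hinit hlast
      _ = 2 ^ (n + 1) := by ring

lemma eq_zero_of_sum_mul_two_pow_eq_zero (he : ∀ k, |e k| ≤ 1)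
    (hsum : ∑ k, e k * 2 ^ (k : ℕ) = 0) : e = 0 := by
  induction n with
  | zero => exact Subsingleton.elim _ _
  | succ n ih =>
    have hsplit : e 0 + 2 * ∑ k : Fin n, e k.succ * 2 ^ (k : ℕ) = 0 := by
      rw [← hsum, Fin.sum_univ_succ, mul_sum]
      simp only [Fin.val_zero, pow_zero, mul_one, Fin.val_succ, pow_succ]
      congr! 2
      ring
    have h0 : e 0 = 0 := by
      have := abs_le.1 (he 0)
      omega
    have htail : (fun k : Fin n ↦ e k.succ) = 0 := ih (fun k ↦ he _) (by omega)
    exact funext (Fin.cases h0 (congrFun htail))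

lemma eq_zero_of_dvd_sum_mul_two_pow {m : ℤ} (hm : 2 ^ n ≤ m) (he : ∀ k, |e k| ≤ 1)
    (hdvd : m ∣ ∑ k, e k * 2 ^ (k : ℕ)) : e = 0 :=
  eq_zero_of_sum_mul_two_pow_eq_zero he <|
    Int.eq_zero_of_abs_lt_dvd hdvd ((abs_sum_mul_two_pow_lt he).trans_le hm)

end SignedBinary

lemma not_dvd_add_mul {m A S c u : ℤ} (hS : |S| < c * A) (hcu : c ≤ |u|) (hA : 0 ≤ A)
    (hm : (|u| + c) * A ≤ m) : ¬ m ∣ S + u * A := by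
  intro hdvd
  have huA : |u * A| = |u| * A := by rw [abs_mul, abs_of_nonneg hA]
  have hzero : S + u * A = 0 :=
    Int.eq_zero_of_abs_lt_dvd hdvd (by linarith [abs_add_le S (u * A)])
  have hSu : |S| = |u| * A := by rw [eq_neg_of_add_eq_zero_left hzero, abs_neg, huA]
  linarith [mul_le_mul_of_nonneg_right hcu hA]

lemma eq_zero_or_abs_mem_Icc {x y z : ℤ} (hx : |x| ≤ 1) (hy : |y| ≤ 1) (hz : |z| ≤ 1) :
    (x = 0 ∧ y = 0 ∧ z = 0) ∨ |-x + y + 3 * z| ∈ Set.Icc 2 4 ∨ |x + y + z| ∈ Set.Icc 1 2 := by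
  rw [abs_le] at hx hy hz
  simp only [Set.mem_Icc]
  grind

lemma eq_zero_of_dvd_sum_add_mul_two_pow {m n : ℤ} {p q : ℕ} (hm : 6 * 2 ^ p ≤ m)
    (hn : 3 * 2 ^ q ≤ n) {f : Fin (p + 1) → ℤ} {g : Fin q → ℤ} {h : Fin 3 → ℤ} (hf : ∀ k, |f k| ≤ 1)
    (hg : ∀ k, |g k| ≤ 1) (hh : ∀ k, |h k| ≤ 1)
    (hmdvd : m ∣ ∑ k, f k * 2 ^ (k : ℕ) + (-h 0 + h 1 + 3 * h 2) * 2 ^ p)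
    (hndvd : n ∣ ∑ k, g k * 2 ^ (k : ℕ) + (h 0 + h 1 + h 2) * 2 ^ q) :
    f = 0 ∧ g = 0 ∧ h = 0 := by
  have hp : (0 : ℤ) < 2 ^ p := by positivity
  have hq : (0 : ℤ) < 2 ^ q := by positivity
  have hf_lt : |∑ k, f k * 2 ^ (k : ℕ)| < 2 * 2 ^ p := by
    simpa only [pow_succ'] using abs_sum_mul_two_pow_lt hf
  have hg_lt : |∑ k, g k * 2 ^ (k : ℕ)| < 1 * 2 ^ q := by
    simpa only [one_mul] using abs_sum_mul_two_pow_lt hg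
  rcases eq_zero_or_abs_mem_Icc (hh 0) (hh 1) (hh 2) with
    ⟨h0, h1, h2⟩ | ⟨hu2, hu4⟩ | ⟨hv1, hv2⟩
  · refine ⟨eq_zero_of_dvd_sum_mul_two_pow (m := m) ?_ hf (by simpa [h0, h1, h2] using hmdvd),
      eq_zero_of_dvd_sum_mul_two_pow (m := n) ?_ hg (by simpa [h0, h1, h2] using hndvd), ?_⟩
    · rw [pow_succ']
      linarith only [hm, hp]
    · linarith only [hn, hq]
    · funext k
      fin_cases k <;> assumption
  · exact absurd hmdvd (not_dvd_add_mul hf_lt hu2 hp.le (by nlinarith only [hm, hp, hu4]))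
  · exact absurd hndvd (not_dvd_add_mul hg_lt hv1 hq.le (by nlinarith only [hn, hq, hv2]))

section Independent

variable {G : Type*} [AddCommGroup G]

lemma containsDissociated_zmultiples {x : G} {a : ℕ} (h : 2 ^ a ≤ addOrderOf x) :
    ContainsDissociated (AddSubgroup.zmultiples x) a := by
  refine ⟨fun k ↦ (2 ^ (k : ℕ) : ℤ) • x, fun k ↦ ⟨_, rfl⟩, fun e he hsum ↦ ?_⟩
  simp_rw [smul_smul, ← sum_smul] at hsum
  exact eq_zero_of_dvd_sum_mul_two_pow (by exact_mod_cast h) he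
    (addOrderOf_dvd_iff_zsmul_eq_zero.2 hsum)

lemma dissociated_zsmul_add_zsmul {κ : Type*} [Fintype κ] {x y : G}
    (hxy : Disjoint (AddSubgroup.zmultiples x) (AddSubgroup.zmultiples y)) {c d : κ → ℤ}
    (h : ∀ e : κ → ℤ, (∀ k, |e k| ≤ 1) → (addOrderOf x : ℤ) ∣ ∑ k, e k * c k →
      (addOrderOf y : ℤ) ∣ ∑ k, e k * d k → e = 0) :
    Dissociated fun k ↦ c k • x + d k • y := by
  intro e he hsum
  simp_rw [smul_add, smul_smul, sum_add_distrib, ← sum_smul] at hsum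
  rw [add_eq_zero_iff_of_disjoint hxy ⟨_, rfl⟩ ⟨_, rfl⟩,
    ← addOrderOf_dvd_iff_zsmul_eq_zero, ← addOrderOf_dvd_iff_zsmul_eq_zero] at hsum
  exact h e he hsum.1 hsum.2

lemma containsDissociated_of_six_mul_le_of_three_mul_le {x y : G} {p q : ℕ}
    (hxy : Disjoint (AddSubgroup.zmultiples x) (AddSubgroup.zmultiples y))
    (hx : 6 * 2 ^ p ≤ addOrderOf x) (hy : 3 * 2 ^ q ≤ addOrderOf y) :
    ContainsDissociated (AddSubgroup.zmultiples x ⊔ AddSubgroup.zmultiples y) (p + q + 4) := by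
  let cx : (Fin (p + 1) ⊕ Fin q) ⊕ Fin 3 → ℤ :=
    Sum.elim (Sum.elim (fun k ↦ 2 ^ (k : ℕ)) 0) fun k ↦ ![-1, 1, 3] k * 2 ^ p
  let cy : (Fin (p + 1) ⊕ Fin q) ⊕ Fin 3 → ℤ :=
    Sum.elim (Sum.elim 0 fun k ↦ 2 ^ (k : ℕ)) fun _ ↦ 2 ^ q
  have hcx (e : (Fin (p + 1) ⊕ Fin q) ⊕ Fin 3 → ℤ) : ∑ k, e k * cx k =
      ∑ k, e (.inl (.inl k)) * 2 ^ (k : ℕ) +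
        (-e (.inr 0) + e (.inr 1) + 3 * e (.inr 2)) * 2 ^ p := by
    simp only [cx, Fintype.sum_sum_type, Sum.elim_inl, Sum.elim_inr, Pi.zero_apply, mul_zero,
      sum_const_zero, add_zero, Fin.sum_univ_three, Matrix.cons_val]
    ring
  have hcy (e : (Fin (p + 1) ⊕ Fin q) ⊕ Fin 3 → ℤ) : ∑ k, e k * cy k =
      ∑ k, e (.inl (.inr k)) * 2 ^ (k : ℕ) + (e (.inr 0) + e (.inr 1) + e (.inr 2)) * 2 ^ q := by
    simp only [cy, Fintype.sum_sum_type, Sum.elim_inl, Sum.elim_inr, Pi.zero_apply, mul_zero,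
      sum_const_zero, zero_add, Fin.sum_univ_three]
    ring
  have hdiss : Dissociated fun k ↦ cx k • x + cy k • y := by
    refine dissociated_zsmul_add_zsmul hxy fun e he hxdvd hydvd ↦ ?_
    obtain ⟨hf, hg, hh⟩ := eq_zero_of_dvd_sum_add_mul_two_pow
      (m := addOrderOf x) (n := addOrderOf y) (by exact_mod_cast hx) (by exact_mod_cast hy)
      (f := fun k ↦ e (.inl (.inl k))) (g := fun k ↦ e (.inl (.inr k)))
      (h := fun k ↦ e (.inr k)) (fun _ ↦ he _) (fun _ ↦ he _) (fun _ ↦ he _)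
      (hcx e ▸ hxdvd) (hcy e ▸ hydvd)
    funext k
    rcases k with (k | k) | k
    exacts [congrFun hf k, congrFun hg k, congrFun hh k]
  have hmem : ∀ k, cx k • x + cy k • y ∈ AddSubgroup.zmultiples x ⊔ AddSubgroup.zmultiples y :=
    fun k ↦ AddSubgroup.add_mem_sup ⟨_, rfl⟩ ⟨_, rfl⟩
  have hcard : Fintype.card ((Fin (p + 1) ⊕ Fin q) ⊕ Fin 3) = p + q + 4 := by
    simp only [Fintype.card_sum, Fintype.card_fin]
    ring
  exact hcard ▸ hdiss.containsDissociated hmem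

lemma containsDissociated_zmultiples_sup_zmultiples {x y : G} {a b : ℕ}
    (hxy : Disjoint (AddSubgroup.zmultiples x) (AddSubgroup.zmultiples y))
    (ha : 2 ≤ a) (hx : 3 * 2 ^ a ≤ 2 * addOrderOf x)
    (hb : 1 ≤ b) (hy : 3 * 2 ^ b ≤ 2 * addOrderOf y) :
    ContainsDissociated (AddSubgroup.zmultiples x ⊔ AddSubgroup.zmultiples y) (a + b + 1) := by
  obtain ⟨p, rfl⟩ := Nat.exists_eq_add_of_le' ha
  obtain ⟨q, rfl⟩ := Nat.exists_eq_add_of_le' hb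
  rw [pow_succ, pow_succ] at hx
  rw [pow_succ] at hy
  convert containsDissociated_of_six_mul_le_of_three_mul_le (p := p) (q := q) hxy
    (by omega) (by omega) using 1
  ring

variable {ι : Type*} {x : ι → G} {a : ι → ℕ}

lemma ContainsDissociated.finset_sup {H : ι → AddSubgroup G} {s : Finset ι} (hH : s.SupIndep H)
    (hs : ∀ i ∈ s, ContainsDissociated (H i) (a i)) :
    ContainsDissociated (s.sup H) (∑ i ∈ s, a i) := by
  classical
  induction s using Finset.induction_on with
  | empty => simpa using containsDissociated_zero _
  | insert i s his ih =>
    rw [sup_insert, sum_insert his]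
    exact (hs i (mem_insert_self i s)).sup
      (hH (subset_insert i s) (mem_insert_self i s) his)
      (ih (hH.subset (subset_insert i s)) fun j hj ↦ hs j (mem_insert_of_mem hj))

lemma containsDissociated_sup_union [DecidableEq ι]
    (hx : iSupIndep fun i ↦ AddSubgroup.zmultiples (x i)) {I J : Finset ι} (hIJ : Disjoint I J)
    (hcard : #I = #J) (hI : ∀ i ∈ I, 2 ≤ a i ∧ 3 * 2 ^ a i ≤ 2 * addOrderOf (x i))
    (hJ : ∀ j ∈ J, 1 ≤ a j ∧ 3 * 2 ^ a j ≤ 2 * addOrderOf (x j)) :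
    ContainsDissociated ((I ∪ J).sup fun i ↦ AddSubgroup.zmultiples (x i))
      (∑ i ∈ I ∪ J, a i + #I) := by
  induction I using Finset.induction_on generalizing J with
  | empty =>
    have hJ0 : J = ∅ := by simpa using hcard.symm
    simpa [hJ0] using containsDissociated_zero _
  | insert i I hiI ih =>
    obtain ⟨hiJ, hIJ⟩ := disjoint_insert_left.1 hIJ
    rw [card_insert_of_notMem hiI] at hcard
    obtain ⟨j, J, hjJ, rfl, hJI⟩ := card_eq_succ.1 hcard.symm
    obtain ⟨hjI, hIJ⟩ := disjoint_insert_right.1 hIJ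
    have hij : i ≠ j := by rintro rfl; simp at hiJ
    have hrest := ih hIJ hJI.symm (fun i hi ↦ hI i (mem_insert_of_mem hi))
      fun j hj ↦ hJ j (mem_insert_of_mem hj)
    obtain ⟨hai, hi⟩ := hI i (mem_insert_self i I)
    obtain ⟨haj, hj⟩ := hJ j (mem_insert_self j J)
    have hpair := containsDissociated_zmultiples_sup_zmultiples (hx.pairwiseDisjoint hij)
      hai hi haj hj
    have hdisj : Disjoint {i, j} (I ∪ J) := by
      simp_all [disjoint_left]
    have hsplit : insert i I ∪ insert j J = {i, j} ∪ (I ∪ J) := by grind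
    have hsup := hpair.sup (by
      simpa using (hx.supIndep' ({i, j} ∪ (I ∪ J))).disjoint_sup_sup
        subset_union_left subset_union_right hdisj) hrest
    rw [hsplit, sup_union, sum_union hdisj, sum_pair hij, card_insert_of_notMem hiI]
    convert hsup using 1
    · simp
    · omega

lemma sum_log_addOrderOf_add_lt_davpm [Finite G] [Fintype ι]
    (hx : iSupIndep fun i ↦ AddSubgroup.zmultiples (x i)) {k : ℕ}
    (hthree : 2 * k ≤ #{i | 3 * 2 ^ Nat.log 2 (addOrderOf (x i)) ≤ 2 * addOrderOf (x i)})
    (hfour : k ≤ #{i | 3 * 2 ^ Nat.log 2 (addOrderOf (x i)) ≤ 2 * addOrderOf (x i) ∧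
      4 ≤ addOrderOf (x i)}) :
    ∑ i, Nat.log 2 (addOrderOf (x i)) + k < Davpm G := by
  classical
  obtain ⟨I, hI, hIk⟩ := exists_subset_card_eq hfour
  have hk_le : k ≤ #((univ.filter fun i ↦
      3 * 2 ^ Nat.log 2 (addOrderOf (x i)) ≤ 2 * addOrderOf (x i)) \ I) :=
    le_trans (by omega) (le_card_sdiff _ _)
  obtain ⟨J, hJ, hJk⟩ := exists_subset_card_eq hk_le
  have hIJ : Disjoint I J := disjoint_sdiff.mono_right hJ
  have hpairs := containsDissociated_sup_union (a := fun i ↦ Nat.log 2 (addOrderOf (x i))) hx hIJ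
    (hIk.trans hJk.symm)
    (fun i hi ↦ by
      obtain ⟨hi3, hi4⟩ := (mem_filter.1 (hI hi)).2
      exact ⟨Nat.le_log_of_pow_le one_lt_two hi4, hi3⟩)
    (fun j hj ↦ by
      have hj3 := (mem_filter.1 (mem_sdiff.1 (hJ hj)).1).2
      refine ⟨Nat.log_pos one_lt_two ?_, hj3⟩
      have := Nat.one_le_two_pow (n := Nat.log 2 (addOrderOf (x j)))
      omega)
  have hrest := ContainsDissociated.finset_sup (hx.supIndep' (I ∪ J)ᶜ) fun i _ ↦
    containsDissociated_zmultiples (Nat.pow_log_le_self 2 (addOrderOf_pos (x i)).ne')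
  have hall := hpairs.sup ((hx.supIndep' univ).disjoint_sup_sup (subset_univ _) (subset_univ _)
    disjoint_compl_right) hrest
  have hlt := hall.lt_davpm
  have := sum_add_sum_compl (I ∪ J) fun i ↦ Nat.log 2 (addOrderOf (x i))
  omega

end Independent

section Pi

variable {ι : Type*} [DecidableEq ι] {M : ι → Type*} [∀ i, AddCommGroup (M i)]

lemma addOrderOf_single (i : ι) (x : M i) : addOrderOf (Pi.single i x) = addOrderOf x :=
  addOrderOf_injective (AddMonoidHom.single M i) (Pi.single_injective (M := M) i) x

lemma iSupIndep_zmultiples_single (x : ∀ i, M i) :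
    iSupIndep fun i ↦ AddSubgroup.zmultiples (Pi.single i (x i)) := by
  intro i
  have hker : ⨆ (j) (_ : j ≠ i), AddSubgroup.zmultiples (Pi.single j (x j)) ≤
      (Pi.evalAddMonoidHom M i).ker := by
    refine iSup₂_le fun j hj ↦ AddSubgroup.zmultiples_le_of_mem ?_
    simp [AddMonoidHom.mem_ker, hj.symm]
  refine AddSubgroup.disjoint_def.2 fun hz hz' ↦ ?_
  obtain ⟨c, rfl⟩ := hz
  have hci : c • x i = 0 := by simpa [AddMonoidHom.mem_ker] using hker hz'
  simp [← Pi.single_smul, hci]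

end Pi

section Logb

lemma floor_logb_natCast_eq_log (b n : ℕ) : ⌊Real.logb b n⌋ = Nat.log b n := by
  rw [Real.floor_logb_natCast n.cast_nonneg, Int.log_natCast]

lemma log_add_fract_logb (b n : ℕ) :
    (Nat.log b n : ℝ) + Int.fract (Real.logb b n) = Real.logb b n := by
  rw [← Int.floor_add_fract (Real.logb b n), floor_logb_natCast_eq_log]
  simp

lemma fract_logb_le_fract_logb_iff {b k n : ℕ} (hb : 1 < b) (hk : 0 < k) (hn : 0 < n) :
    Int.fract (Real.logb b k) ≤ Int.fract (Real.logb b n) ↔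
      k * b ^ Nat.log b n ≤ b ^ Nat.log b k * n := by
  have hb' : (1 : ℝ) < b := by exact_mod_cast hb
  have hb0 : (0 : ℝ) < b := zero_lt_one.trans hb'
  have hk0 : (0 : ℝ) < k := by exact_mod_cast hk
  have hn0 : (0 : ℝ) < n := by exact_mod_cast hn
  have hlog : Real.logb b (k * b ^ Nat.log b n) ≤ Real.logb b (b ^ Nat.log b k * n) ↔
      (k : ℝ) * b ^ Nat.log b n ≤ b ^ Nat.log b k * n :=
    Real.logb_le_logb hb' (mul_pos hk0 (pow_pos hb0 _)) (mul_pos (pow_pos hb0 _) hn0)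
  rw [Real.logb_mul hk0.ne' (pow_pos hb0 _).ne', Real.logb_mul (pow_pos hb0 _).ne' hn0.ne',
    Real.logb_pow, Real.logb_pow, Real.logb_self_eq_one hb', mul_one, mul_one,
    ← log_add_fract_logb b k, ← log_add_fract_logb b n] at hlog
  rw [← Nat.cast_le (α := ℝ)]
  push_cast
  rw [← hlog]
  constructor <;> intro h <;> linarith

lemma fract_logb_three_le_iff {n : ℕ} (hn : 0 < n) :
    Int.fract (Real.logb 2 3) ≤ Int.fract (Real.logb 2 n) ↔ 3 * 2 ^ Nat.log 2 n ≤ 2 * n := by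
  have hlog : Nat.log 2 3 = 1 := by decide
  simpa [hlog] using fract_logb_le_fract_logb_iff one_lt_two three_pos hn

end Logb

theorem stmt9_general {ι : Type*} [Fintype ι] (m : ι → ℕ) (hm : ∀ i, 0 < m i) (k : ℕ)
    (hthree : 2 * k ≤ #{i | Int.fract (Real.logb 2 3) ≤ Int.fract (Real.logb 2 (m i))})
    (hfour : k ≤ #{i | Int.fract (Real.logb 2 3) ≤ Int.fract (Real.logb 2 (m i)) ∧ 4 ≤ m i})
    (hsum : ∑ i, Int.fract (Real.logb 2 (m i)) < k + 1) :
    (Davpm (∀ i, ZMod (m i)) : ℤ) = ⌊∑ i, Real.logb 2 (m i)⌋ + 1 := by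
  classical
  have : ∀ i, NeZero (m i) := fun i ↦ ⟨(hm i).ne'⟩
  simp only [fract_logb_three_le_iff (hm _)] at hthree hfour
  have hord (i : ι) : addOrderOf (Pi.single i 1 : ∀ i, ZMod (m i)) = m i := by
    rw [addOrderOf_single, ZMod.addOrderOf_one]
  have hlower : ∑ i, Nat.log 2 (m i) + k < Davpm (∀ i, ZMod (m i)) := by
    simpa only [hord] using sum_log_addOrderOf_add_lt_davpm
      (iSupIndep_zmultiples_single fun i ↦ (1 : ZMod (m i)))
      (by simpa only [hord] using hthree) (by simpa only [hord] using hfour)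
  have hupper : (Nat.log 2 (Nat.card (∀ i, ZMod (m i))) : ℤ) = ⌊∑ i, Real.logb 2 (m i)⌋ := by
    rw [← Real.logb_prod _ _ fun i _ ↦ by exact_mod_cast (hm i).ne', Nat.card_pi]
    simpa using (floor_logb_natCast_eq_log 2 (∏ i, m i)).symm
  have hfloor : ⌊∑ i, Real.logb 2 (m i)⌋ < ∑ i, Nat.log 2 (m i) + k + 1 := by
    have hsplit : ∑ i, Real.logb 2 (m i) =
        ∑ i, (Nat.log 2 (m i) : ℝ) + ∑ i, Int.fract (Real.logb 2 (m i)) := by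
      rw [← sum_add_distrib]
      exact sum_congr rfl fun i _ ↦ (log_add_fract_logb 2 (m i)).symm
    rw [Int.floor_lt, hsplit]
    push_cast
    linarith
  have := davpm_le_log_card_add_one (∀ i, ZMod (m i))
  omega

theorem stmt9 (r : ℕ) (m : Fin r → ℕ) (hm : ∀ i, 0 < m i)
    (hfr : ∀ i, Int.fract (Real.logb 2 3) ≤ Int.fract (Real.logb 2 (m i)))
    (hmany : r / 2 ≤ (Finset.univ.filter fun i =>
        Int.fract (Real.logb 2 3) ≤ Int.fract (Real.logb 2 (m i)) ∧ 4 ≤ m i).card)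
    (hsum : ∑ i, Int.fract (Real.logb 2 (m i)) < (r / 2 : ℕ) + 1) :
    (Davpm (∀ i, ZMod (m i)) : ℤ) = ⌊∑ i, Real.logb 2 (m i)⌋ + 1 := by
  refine stmt9_general m hm (r / 2) ?_ hmany hsum
  simpa [filter_true_of_mem fun i _ ↦ hfr i] using Nat.mul_div_le r 2
end
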